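/- Let p be an odd prime. In the polynomial ring 𝔽_p[t][x], write (x² + t·x + 1)^((p−1)/2) = Σ_{n=0}^{p−1} c_n x^n, where each c_n ∈ 𝔽_p[t], and set Φ := Π_{n=0}^{(p−1)/2} c_n ∈ 𝔽_p[t]. Then for every integer i > 1 there exists t₀ ∈ 𝔽_{p^i} with t₀ ≠ 2, t₀ ≠ −2, and Φ(t₀) ≠ 0. -/

import Mathlib

/-!
If the coefficients of `g` do not involve `t`, then in the expansion of `(g + t * x) ^ m` a power
`t ^ j` always comes with `x ^ j`, so the coefficient `cₙ` of `x ^ n` has degree at most `n` in `t`,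
and the coefficient of `t ^ n` in `cₙ` is `m.choose n * g(0) ^ (m - n)`. For `g = x² + 1` and
`m < p` this is a binomial coefficient prime to `p`. Hence `Φ` is a nonzero polynomial of degree at
most `0 + 1 + ⋯ + m`, and its roots together with `±2` do not exhaust a field of at least `p ^ 2`
elements.
-/

section CoefficientsOfPowers

open Polynomial

variable {R : Type*} [CommSemiring R]

theorem coeff_coeff_map_C_add_C_X_mul_X_pow (g : R[X]) (m n j : ℕ) :
    (((g.map C + C X * X) ^ m).coeff n).coeff j =
      if j ≤ n then m.choose j * (g ^ (m - j)).coeff (n - j) else 0 := by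
  have expansion : (g.map C + C X * X) ^ m =
      ∑ k ∈ Finset.range (m + 1), C (C (m.choose k : R) * X ^ k) * (g ^ (m - k)).map C * X ^ k := by
    rw [add_comm, add_pow]
    refine Finset.sum_congr rfl fun k _ ↦ ?_
    simp only [mul_pow, Polynomial.map_pow, map_mul, map_pow, map_natCast]
    ring
  have coeff_term (k : ℕ) :
      ((C (C (m.choose k : R) * X ^ k) * (g ^ (m - k)).map C * X ^ k).coeff n).coeff j =
        if j = k then (if j ≤ n then m.choose j * (g ^ (m - j)).coeff (n - j) else 0) else 0 := by
    simp only [coeff_mul_X_pow', coeff_C_mul, coeff_map]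
    obtain rfl | hjk := eq_or_ne j k
    · rw [if_pos rfl]
      split_ifs <;> simp only [coeff_mul_C, coeff_C_mul_X_pow, if_true, coeff_zero]
    · split_ifs <;> simp only [coeff_mul_C, coeff_C_mul_X_pow, if_neg hjk, zero_mul, coeff_zero]
  simp only [expansion, finsetSum_coeff, coeff_term, Finset.sum_ite_eq, Finset.mem_range]
  split_ifs with hjm hjn
  · rfl
  · rfl
  all_goals simp [Nat.choose_eq_zero_of_lt (show m < j by lia)]

theorem natDegree_coeff_map_C_add_C_X_mul_X_pow_le (g : R[X]) (m n : ℕ) :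
    (((g.map C + C X * X) ^ m).coeff n).natDegree ≤ n :=
  natDegree_le_iff_coeff_eq_zero.2 fun j hj ↦ by
    rw [coeff_coeff_map_C_add_C_X_mul_X_pow, if_neg hj.not_ge]

theorem coeff_coeff_map_C_add_C_X_mul_X_pow_self (g : R[X]) (m n : ℕ) :
    (((g.map C + C X * X) ^ m).coeff n).coeff n = m.choose n * g.coeff 0 ^ (m - n) := by
  rw [coeff_coeff_map_C_add_C_X_mul_X_pow, if_pos le_rfl, Nat.sub_self, coeff_zero_eq_eval_zero,
    eval_pow, coeff_zero_eq_eval_zero]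

theorem X_sq_add_C_X_mul_X_add_one_eq :
    (X ^ 2 + C X * X + 1 : R[X][X]) = (X ^ 2 + 1 : R[X]).map C + C X * X := by
  simp only [Polynomial.map_add, Polynomial.map_pow, map_X, Polynomial.map_one]
  ring

end CoefficientsOfPowers

theorem natCast_choose_ne_zero_of_lt_prime (A : Type*) [AddMonoidWithOne A] {p : ℕ} [CharP A p]
    (hp : p.Prime) {m n : ℕ} (hm : m < p) (hn : n ≤ m) : (m.choose n : A) ≠ 0 := by
  rw [Ne, CharP.cast_eq_zero_iff A p, ← hp.coprime_iff_not_dvd]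
  exact hp.coprime_choose_of_lt hm hn

theorem sum_range_succ_add_two_lt_pow {p m i : ℕ} (hp : 2 ≤ p) (hm : m < p) (hi : 1 < i) :
    (∑ n ∈ Finset.range (m + 1), n) + 2 < p ^ i := by
  have gauss := Finset.sum_range_id_mul_two (m + 1)
  have sq_le : p ^ 2 ≤ p ^ i := Nat.pow_le_pow_right (by lia) hi
  rw [Nat.add_sub_cancel] at gauss
  nlinarith

theorem sum_range_succ_add_card_lt_card_galoisField {p m i : ℕ} [hp : Fact p.Prime] (hm : m < p)
    (hi : 1 < i) {s : Finset (GaloisField p i)} (hs : s.card ≤ 2) :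
    ((∑ n ∈ Finset.range (m + 1), n) + s.card : ℕ) < ENat.card (GaloisField p i) := by
  rw [ENat.card_eq_coe_natCard, GaloisField.card p i (by lia), Nat.cast_lt]
  exact (Nat.add_le_add_left hs _).trans_lt
    (sum_range_succ_add_two_lt_pow hp.out.two_le hm hi)

section AvoidingRoots

open Polynomial

theorem exists_notMem_eval_ne_zero_of_natDegree_add_card_lt {A : Type*} [CommRing A] [IsDomain A]
    {f : A[X]} (hf : f ≠ 0) (s : Finset A)
    (hs : (f.natDegree + s.card : ℕ) < ENat.card A) : ∃ t ∉ s, f.eval t ≠ 0 := by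
  classical
  have card_le : (f.roots.toFinset ∪ s).card ≤ f.natDegree + s.card :=
    (Finset.card_union_le _ _).trans
      (Nat.add_le_add_right (f.roots.toFinset_card_le.trans f.card_roots') _)
  obtain ⟨t, ht⟩ := Finset.exists_not_mem_of_card_lt_enatCard
    ((Nat.cast_le.2 card_le).trans_lt hs)
  rw [Finset.mem_union, not_or, Multiset.mem_toFinset, mem_roots hf] at ht
  exact ⟨t, ht.2, ht.1⟩

theorem stmt11_general {R A : Type*} [CommSemiring R] [CommRing A] [IsDomain A] [Algebra R A]
    {g : R[X]} (hg : algebraMap R A (g.coeff 0) ≠ 0) {m : ℕ} {J : Finset ℕ}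
    (hJ : ∀ n ∈ J, (m.choose n : A) ≠ 0) (s : Finset A)
    (hs : ((∑ n ∈ J, n) + s.card : ℕ) < ENat.card A) :
    ∃ t ∉ s, aeval t (∏ n ∈ J, ((g.map C + C X * X) ^ m).coeff n) ≠ 0 := by
  set Φ : R[X] := ∏ n ∈ J, ((g.map C + C X * X) ^ m).coeff n with hΦ
  have map_ne_zero : Φ.map (algebraMap R A) ≠ 0 := by
    rw [hΦ, Polynomial.map_prod, Finset.prod_ne_zero_iff]
    intro n hn hzero
    have top_coeff := congr_arg (coeff · n) hzero
    simp only [coeff_map, coeff_coeff_map_C_add_C_X_mul_X_pow_self, map_mul, map_pow, map_natCast,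
      coeff_zero] at top_coeff
    exact mul_ne_zero (hJ n hn) (pow_ne_zero _ hg) top_coeff
  have natDegree_le : (Φ.map (algebraMap R A)).natDegree ≤ ∑ n ∈ J, n :=
    natDegree_map_le.trans <| (natDegree_prod_le _ _).trans <|
      Finset.sum_le_sum fun n _ ↦ natDegree_coeff_map_C_add_C_X_mul_X_pow_le g m n
  simpa only [eval_map_algebraMap] using
    exists_notMem_eval_ne_zero_of_natDegree_add_card_lt map_ne_zero s
      ((Nat.cast_le.2 (Nat.add_le_add_right natDegree_le _)).trans_lt hs)

end AvoidingRoots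

open Polynomial in
/-- Let `p` be an odd prime. Writing `(x² + t·x + 1)^((p-1)/2) = Σ cₙ xⁿ` in `𝔽_p[t][x]`
and setting `Φ := Π_{n=0}^{(p-1)/2} cₙ`, for every integer `i > 1` there exists
`t₀ ∈ 𝔽_{p^i}` with `t₀ ≠ ±2` and `Φ(t₀) ≠ 0`. -/
theorem stmt11 (p : ℕ) [Fact p.Prime] (hodd : Odd p) (i : ℕ) (hi : 1 < i) :
    ∃ t₀ : GaloisField p i, t₀ ≠ 2 ∧ t₀ ≠ -2 ∧
      Polynomial.aeval t₀
        (∏ n ∈ Finset.range ((p - 1) / 2 + 1),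
          ((X ^ 2 + C (X : Polynomial (ZMod p)) * X + 1) ^ ((p - 1) / 2)).coeff n) ≠ 0 := by
  classical
  have exponent_lt : (p - 1) / 2 < p := by have := (Fact.out : p.Prime).pos; lia
  simpa only [X_sq_add_C_X_mul_X_add_one_eq, Finset.mem_insert, Finset.mem_singleton, not_or,
    and_assoc] using
    stmt11_general (g := (X ^ 2 + 1 : (ZMod p)[X])) (by simp)
      (fun n hn ↦ natCast_choose_ne_zero_of_lt_prime (GaloisField p i) Fact.out exponent_lt
        (Finset.mem_range_succ_iff.1 hn))
      {2, -2} (sum_range_succ_add_card_lt_card_galoisField exponent_lt hi Finset.card_le_two)
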